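/- arXiv:1509.00378 — 5 statements merged into one kernel-verified Lean document; each statement's English description precedes it below -/
import Mathlib

section
/- Let p be a prime and A, B natural numbers with 2*A*B < p. Let a, a' be integers with |a| ≤ A and |a'| ≤ A, and let b, b' be integers with 0 < b ≤ B and 0 < b' ≤ B. If a·b' ≡ a'·b (mod p), then a·b' = a'·b as integers. -/
theorem eq_of_intModEq_of_abs_add_abs_lt {m x y : ℤ} (h : x ≡ y [ZMOD m])
    (hlt : |x| + |y| < m) : x = y := by
  have hdiff : |x - y| < m := (abs_sub x y).trans_lt hlt
  exact sub_eq_zero.mp (Int.eq_zero_of_abs_lt_dvd h.symm.dvd hdiff)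

theorem abs_mul_le_mul_of_abs_le {R : Type*} [Ring R] [LinearOrder R] [IsOrderedRing R]
    {a b A B : R} (ha : |a| ≤ A) (hb : |b| ≤ B) : |a * b| ≤ A * B := by
  rw [abs_mul]
  exact mul_le_mul ha hb (abs_nonneg b) ((abs_nonneg a).trans ha)

theorem rational_reconstruction_fraction_unique_general {m A A' B B' a a' b b' : ℤ}
    (hm : A * B' + A' * B < m) (ha : |a| ≤ A) (ha' : |a'| ≤ A') (hb : |b| ≤ B) (hb' : |b'| ≤ B')
    (hcong : a * b' ≡ a' * b [ZMOD m]) :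
    a * b' = a' * b := by
  apply eq_of_intModEq_of_abs_add_abs_lt hcong
  calc
    |a * b'| + |a' * b| ≤ A * B' + A' * B :=
      add_le_add (abs_mul_le_mul_of_abs_le ha hb') (abs_mul_le_mul_of_abs_le ha' hb)
    _ < m := hm

/-- Rational reconstruction uniqueness (fraction): if `2*A*B < p` with `p` prime,
`|a|, |a'| ≤ A`, `0 < b, b' ≤ B` and `a*b' ≡ a'*b (mod p)`, then `a*b' = a'*b`. -/
theorem rational_reconstruction_fraction_unique
    (p : ℕ) (hp : p.Prime) (A B : ℕ) (hAB : 2 * A * B < p)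
    (a a' b b' : ℤ)
    (ha : |a| ≤ (A : ℤ)) (ha' : |a'| ≤ (A : ℤ))
    (hb0 : 0 < b) (hb : b ≤ (B : ℤ))
    (hb'0 : 0 < b') (hb' : b' ≤ (B : ℤ))
    (hcong : a * b' ≡ a' * b [ZMOD (p : ℕ)]) :
    a * b' = a' * b := by
  have hp' : (A : ℤ) * B + A * B < p := by zify at hAB; linarith
  exact rational_reconstruction_fraction_unique_general hp' ha ha'
    ((abs_of_pos hb0).trans_le hb) ((abs_of_pos hb'0).trans_le hb') hcong
end

section
/- Let p be a prime and A, B natural numbers with 2*A*B < p. Let a, a' be integers with |a| ≤ A and |a'| ≤ A, and let b, b' be integers with 0 < b ≤ B and 0 < b' ≤ B, such that gcd(a,b) = 1 and gcd(a',b') = 1. If a·b' ≡ a'·b (mod p), then a = a' and b = b'. -/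
theorem abs_mul_sub_mul_le {R : Type*} [CommRing R] [LinearOrder R] [IsOrderedRing R]
    {a a' b b' A A' B B' : R} (ha : |a| ≤ A) (ha' : |a'| ≤ A') (hb : |b| ≤ B) (hb' : |b'| ≤ B') :
    |a * b' - a' * b| ≤ A * B' + A' * B := by
  have hA : 0 ≤ A := (abs_nonneg a).trans ha
  have hA' : 0 ≤ A' := (abs_nonneg a').trans ha'
  calc |a * b' - a' * b| ≤ |a * b'| + |a' * b| := abs_sub _ _
    _ = |a| * |b'| + |a'| * |b| := by rw [abs_mul, abs_mul]
    _ ≤ A * B' + A' * B := by gcongr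

theorem mul_eq_mul_of_modEq_of_abs_le {n A A' B B' a a' b b' : ℤ} (hn : A * B' + A' * B < n)
    (ha : |a| ≤ A) (ha' : |a'| ≤ A') (hb : |b| ≤ B) (hb' : |b'| ≤ B')
    (hcong : a * b' ≡ a' * b [ZMOD n]) : a * b' = a' * b :=
  sub_eq_zero.mp <| Int.eq_zero_of_abs_lt_dvd hcong.symm.dvd <|
    (abs_mul_sub_mul_le ha ha' hb hb').trans_lt hn

theorem rational_reconstruction_pair_unique_general {n A B a a' b b' : ℤ} (hAB : 2 * A * B < n)
    (ha : |a| ≤ A) (ha' : |a'| ≤ A)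
    (hb0 : 0 < b) (hb : b ≤ B) (hb'0 : 0 < b') (hb' : b' ≤ B)
    (hg : Int.gcd a b = 1) (hg' : Int.gcd a' b' = 1)
    (hcong : a * b' ≡ a' * b [ZMOD n]) :
    a = a' ∧ b = b' := by
  have cross_eq : a * b' = a' * b :=
    mul_eq_mul_of_modEq_of_abs_le (by linarith) ha ha' ((abs_of_pos hb0).trans_le hb)
      ((abs_of_pos hb'0).trans_le hb') hcong
  have fraction_eq : (a / b : ℚ) = a' / b' := by
    rw [div_eq_div_iff (mod_cast hb0.ne') (mod_cast hb'0.ne')]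
    exact_mod_cast cross_eq
  exact Rat.div_int_inj hb0 hb'0 hg hg' fraction_eq

/-- Rational reconstruction uniqueness (pair): with the normalization
`gcd(a,b) = gcd(a',b') = 1`, the pair `(a, b)` itself is uniquely determined. -/
theorem rational_reconstruction_pair_unique
    (p : ℕ) (hp : p.Prime) (A B : ℕ) (hAB : 2 * A * B < p)
    (a a' b b' : ℤ)
    (ha : |a| ≤ (A : ℤ)) (ha' : |a'| ≤ (A : ℤ))
    (hb0 : 0 < b) (hb : b ≤ (B : ℤ))
    (hb'0 : 0 < b') (hb' : b' ≤ (B : ℤ))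
    (hg : Int.gcd a b = 1) (hg' : Int.gcd a' b' = 1)
    (hcong : a * b' ≡ a' * b [ZMOD (p : ℕ)]) :
    a = a' ∧ b = b' :=
  rational_reconstruction_pair_unique_general (mod_cast hAB) ha ha' hb0 hb hb'0 hb' hg hg' hcong
end

section
/- Let p_1 = 2, p_2 = 3, … denote the primes in increasing order. Let k, t be positive integers and let p be a prime with 2·(p_k)^{2t} < p. Let m, m' : {1,…,k} → {0,1} be two k-bit strings differing in at most 2t positions. If ∏_{i=1}^k p_i^{m_i} ≡ ∏_{i=1}^k p_i^{m'_i} (mod p), then m = m'. -/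
/-!
Identify a bit string with its support, so that the two messages become finite sets `s` and `t`.
The factors indexed by `s ∩ t` are units modulo `p` and cancel, which leaves a congruence between
the products over `s \ t` and `t \ s`. Each of these sets has at most as many elements as there are
differing positions, so both products are at most `p_k ^ (2t) < p` and the congruence is an equality
of natural numbers. Pairwise coprimality of the factors then gives `s \ t = t \ s`, that is, `s = t`.
-/

open Finset Function

section Products

variable {ι : Type*} {s t : Finset ι}

lemma subset_of_prod_dvd_prod {M : Type*} [CommMonoid M] [DecompositionMonoid M] {q : ι → M}
    (hq : Pairwise (IsRelPrime on q)) (hunit : ∀ i ∈ s, ¬ IsUnit (q i))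
    (h : ∏ i ∈ s, q i ∣ ∏ i ∈ t, q i) : s ⊆ t := by
  intro i hi
  by_contra hit
  have hrel : IsRelPrime (q i) (∏ j ∈ t, q j) :=
    .prod_right fun j hj ↦ hq (ne_of_mem_of_not_mem hj hit).symm
  exact hunit i hi (hrel.isUnit_of_dvd ((dvd_prod_of_mem q hi).trans h))

lemma prod_sdiff_modEq [DecidableEq ι] {q : ι → ℕ} {n : ℕ}
    (hcop : ∀ i ∈ s ∩ t, n.Coprime (q i))
    (h : ∏ i ∈ s, q i ≡ ∏ i ∈ t, q i [MOD n]) :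
    ∏ i ∈ s \ t, q i ≡ ∏ i ∈ t \ s, q i [MOD n] := by
  rw [← prod_inter_mul_prod_sdiff s t q, ← prod_inter_mul_prod_sdiff t s q, inter_comm t s] at h
  exact Nat.ModEq.cancel_left_of_coprime (Nat.Coprime.prod_right hcop) h

lemma eq_of_prod_modEq_of_prod_sdiff_lt [DecidableEq ι] {q : ι → ℕ} {n : ℕ}
    (hq : Pairwise (Nat.Coprime on q)) (hone : ∀ i, q i ≠ 1)
    (hcop : ∀ i ∈ s ∩ t, n.Coprime (q i))
    (hst : ∏ i ∈ s \ t, q i < n) (hts : ∏ i ∈ t \ s, q i < n)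
    (h : ∏ i ∈ s, q i ≡ ∏ i ∈ t, q i [MOD n]) : s = t := by
  have heq : ∏ i ∈ s \ t, q i = ∏ i ∈ t \ s, q i := (prod_sdiff_modEq hcop h).eq_of_lt_of_lt hst hts
  have hrel : Pairwise (IsRelPrime on q) := fun i j hij ↦ Nat.coprime_iff_isRelPrime.1 (hq hij)
  have hunit (i : ι) : ¬ IsUnit (q i) := Nat.isUnit_iff.not.2 (hone i)
  have hle : s \ t ≤ t \ s := subset_of_prod_dvd_prod hrel (fun i _ ↦ hunit i) heq.dvd
  have hge : t \ s ≤ s \ t := subset_of_prod_dvd_prod hrel (fun i _ ↦ hunit i) heq.symm.dvd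
  exact (sdiff_eq_bot_iff.1 (disjoint_sdiff_sdiff.eq_bot_of_le hle)).antisymm
    (sdiff_eq_bot_iff.1 (disjoint_sdiff_sdiff.eq_bot_of_le hge))

lemma prod_le_pow_of_card_le {q : ι → ℕ} {Q d : ℕ} (hQ : 0 < Q) (hle : ∀ i ∈ s, q i ≤ Q)
    (hcard : #s ≤ d) : ∏ i ∈ s, q i ≤ Q ^ d :=
  (prod_le_pow_card s q Q hle).trans (Nat.pow_le_pow_right hQ hcard)

end Products

section BitStrings

variable {ι : Type*} [Fintype ι]

lemma prod_pow_bit_eq_prod_filter {M : Type*} [CommMonoid M] (q : ι → M) (m : ι → Bool) :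
    ∏ i, q i ^ (if m i then 1 else 0) = ∏ i with m i, q i := by
  simp only [prod_filter, pow_ite, pow_one, pow_zero]

lemma card_filter_sdiff_filter_le_hammingDist [DecidableEq ι] (m m' : ι → Bool) :
    #(univ.filter (m · = true) \ univ.filter (m' · = true)) ≤ hammingDist m m' := by
  refine card_le_card fun i hi ↦ ?_
  simp only [mem_sdiff, mem_filter_univ] at hi ⊢
  exact fun heq ↦ hi.2 (heq ▸ hi.1)

theorem ns_code_injective_on_ball_general {q : ι → ℕ} {Q d n : ℕ}
    (hq : Pairwise (Nat.Coprime on q)) (hone : ∀ i, 1 < q i) (hle : ∀ i, q i ≤ Q)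
    (hcop : ∀ i, n.Coprime (q i)) (hn : Q ^ d < n) {m m' : ι → Bool} (hdist : hammingDist m m' ≤ d)
    (hcong : ∏ i, q i ^ (if m i then 1 else 0) ≡ ∏ i, q i ^ (if m' i then 1 else 0) [MOD n]) :
    m = m' := by
  classical
  rcases isEmpty_or_nonempty ι with _ | ⟨⟨i₀⟩⟩
  · exact Subsingleton.elim m m'
  have hQ : 0 < Q := (Nat.zero_lt_one.trans (hone i₀)).trans_le (hle i₀)
  have hlt {s : Finset ι} (hs : #s ≤ hammingDist m m') : ∏ i ∈ s, q i < n :=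
    (prod_le_pow_of_card_le hQ (fun i _ ↦ hle i) (hs.trans hdist)).trans_lt hn
  rw [prod_pow_bit_eq_prod_filter, prod_pow_bit_eq_prod_filter] at hcong
  have hsupp : univ.filter (m · = true) = univ.filter (m' · = true) :=
    eq_of_prod_modEq_of_prod_sdiff_lt hq (fun i ↦ (hone i).ne') (fun i _ ↦ hcop i)
      (hlt (card_filter_sdiff_filter_le_hammingDist m m'))
      (hlt (hammingDist_comm m m' ▸ card_filter_sdiff_filter_le_hammingDist m' m)) hcong
  funext i
  exact Bool.eq_iff_iff.2 (by simpa only [mem_filter_univ] using Finset.ext_iff.1 hsupp i)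

end BitStrings

lemma pairwise_coprime_nth_prime : Pairwise (Nat.Coprime on Nat.nth Nat.Prime) := fun i j hij ↦
  (Nat.coprime_primes (Nat.prime_nth_prime i) (Nat.prime_nth_prime j)).2
    ((Nat.nth_injective Nat.infinite_setOfPred_prime).ne hij)

lemma nth_prime_le_nth_prime_sub_one {i k : ℕ} (h : i < k) :
    Nat.nth Nat.Prime i ≤ Nat.nth Nat.Prime (k - 1) :=
  Nat.nth_monotone Nat.infinite_setOfPred_prime (Nat.le_pred_of_lt h)

/-- Correctness of the code for `γ = 2`: if `p` is a prime with `2·(p_k)^{2t} < p`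
and the bit strings `m, m'` differ in at most `2t` positions, then
`c(m) ≡ c(m') (mod p)` forces `m = m'`. -/
theorem ns_code_injective_on_ball
    (k t : ℕ) (hk : 0 < k) (ht : 0 < t) (p : ℕ) (hp : p.Prime)
    (hpbig : 2 * (Nat.nth Nat.Prime (k - 1)) ^ (2 * t) < p)
    (m m' : Fin k → Bool)
    (hdist : (Finset.univ.filter (fun i : Fin k => m i ≠ m' i)).card ≤ 2 * t)
    (hcong : (∏ i : Fin k, (Nat.nth Nat.Prime i.val) ^ (if m i then 1 else 0)) ≡
             (∏ i : Fin k, (Nat.nth Nat.Prime i.val) ^ (if m' i then 1 else 0)) [MOD p]) :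
    m = m' := by
  have hpow : Nat.nth Nat.Prime (k - 1) ^ (2 * t) < p := by omega
  have hcop (i : Fin k) : p.Coprime (Nat.nth Nat.Prime i) :=
    Nat.coprime_of_lt_prime (Nat.prime_nth_prime i).ne_zero
      ((nth_prime_le_nth_prime_sub_one i.isLt).trans_lt
        ((Nat.le_self_pow (by omega) _).trans_lt hpow)) hp
  exact ns_code_injective_on_ball_general
    (pairwise_coprime_nth_prime.comp_of_injective Fin.val_injective)
    (fun i ↦ (Nat.prime_nth_prime i).one_lt) (fun i ↦ nth_prime_le_nth_prime_sub_one i.isLt)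
    hcop hpow hdist hcong
end

section
/- Let a, b, N, u, p be positive integers with a·b ≤ N and 2^u·N < p. Then there exists a positive integer i such that a ≤ 2^{u·i} and b·2^{u·i} ≤ 2·p. -/
/-! Among the powers `q ^ i` with `i ≥ 1`, the first one to exceed `a ≥ 1` is at most `q * a`. For
`q = 2 ^ u` it serves as `A_i`, and `b * A_i ≤ 2 ^ u * (a * b) ≤ 2 ^ u * N < p`. -/

theorem exists_pos_lt_pow_and_pow_le_mul {R : Type*} [Semiring R] [LinearOrder R]
    [IsStrictOrderedRing R] [Archimedean R] [ExistsAddOfLE R] {a q : R} (ha : 1 ≤ a) (hq : 1 < q) :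
    ∃ i : ℕ, 0 < i ∧ a < q ^ i ∧ q ^ i ≤ q * a := by
  obtain ⟨j, hj_le, hj_lt⟩ := exists_nat_pow_near ha hq
  have hq_nonneg : 0 ≤ q := zero_le_one.trans hq.le
  refine ⟨j + 1, j.succ_pos, hj_lt, ?_⟩
  calc q ^ (j + 1) = q * q ^ j := pow_succ' q j
    _ ≤ q * a := mul_le_mul_of_nonneg_left hj_le hq_nonneg

theorem small_prime_variant_bound_pair_exists_general {R : Type*} [CommSemiring R] [LinearOrder R]
    [IsStrictOrderedRing R] [Archimedean R] [ExistsAddOfLE R] {a b q M : R}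
    (ha : 1 ≤ a) (hb : 0 ≤ b) (hq : 1 < q) (hM : q * (a * b) ≤ M) :
    ∃ i : ℕ, 0 < i ∧ a ≤ q ^ i ∧ b * q ^ i ≤ M := by
  obtain ⟨i, hi, ha_lt, hi_le⟩ := exists_pos_lt_pow_and_pow_le_mul ha hq
  refine ⟨i, hi, ha_lt.le, ?_⟩
  calc b * q ^ i ≤ b * (q * a) := mul_le_mul_of_nonneg_left hi_le hb
    _ = q * (a * b) := by ring
    _ ≤ M := hM

/-- Decoding of the smaller-prime variant: if `a·b ≤ N` and `2^u·N < p`, then some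
index `i ≥ 1` satisfies `a ≤ A_i = 2^{u·i}` and `b ≤ B_i = ⌊2p/A_i⌋`
(stated as `b·2^{u·i} ≤ 2·p`). -/
theorem small_prime_variant_bound_pair_exists
    (a b N u p : ℕ) (ha : 0 < a) (hb : 0 < b) (hN : 0 < N) (hu : 0 < u) (hp : 0 < p)
    (hab : a * b ≤ N) (hpN : 2 ^ u * N < p) :
    ∃ i : ℕ, 0 < i ∧ a ≤ 2 ^ (u * i) ∧ b * 2 ^ (u * i) ≤ 2 * p := by
  have hM : 2 ^ u * (a * b) ≤ 2 * p := by grw [hab, hpN]; omega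
  simpa only [pow_mul] using small_prime_variant_bound_pair_exists_general ha b.zero_le
    (Nat.one_lt_two_pow hu.ne') hM
end

section
/- Let p_1 = 2, p_2 = 3, … denote the primes in increasing order. Let γ ≥ 2, κ ≥ 1 and t ≥ 0 be integers with t ≤ κ, let f = ∏_{j=κ−t}^{κ} p_{γj}, and let p be a prime with 2·f² < p. Let m, m' : {0,…,κ−1} → {0,…,γ−1} be two digit strings with #{i : m_i ≠ m'_i} ≤ t. If ∏_{i=0}^{κ−1} p_{iγ + m_i + 1} ≡ ∏_{i=0}^{κ−1} p_{iγ + m'_i + 1} (mod p), then m = m'. -/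
/-!
Let `D` be the set of positions where `m` and `m'` differ. The primes picked outside `D` are common
to both encodings and smaller than `p`, so they cancel modulo `p`. What remains are two products of
at most `t` primes, the one at position `i` being at most the last prime `p_{γ(i+1)}` of its pack;
hence both are at most the product of the last primes of the top `t` packs, so below `p`, and
congruence becomes equality. The packs being disjoint, unique factorization then shows that `m` and
`m'` have the same digits in `D`, so `D` is empty.
-/

open Finset

section Exchange

variable {α M : Type*} [LinearOrder α] [LocallyFiniteOrder α]
  [CommMonoid M] [PartialOrder M] [IsOrderedMonoid M]

lemma prod_le_prod_Ioc_of_card_le {g : α → M} (hg : Monotone g) {a b : α} (ha : 1 ≤ g a)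
    {s : Finset α} (hs : ∀ j ∈ s, j ≤ b) (hcard : #s ≤ #(Ioc a b)) :
    ∏ j ∈ s, g j ≤ ∏ j ∈ Ioc a b, g j := by
  -- `g a` separates the values of `g` on `s \ Ioc a b` from those on `Ioc a b \ s`.
  have hlow : ∀ j ∈ s \ Ioc a b, g j ≤ g a := fun j hj ↦ by
    obtain ⟨hjs, hj⟩ := mem_sdiff.1 hj
    exact hg (not_lt.1 fun haj ↦ hj (mem_Ioc.2 ⟨haj, hs j hjs⟩))
  have hhigh : ∀ j ∈ Ioc a b \ s, g a ≤ g j := fun j hj ↦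
    hg (mem_Ioc.1 (mem_sdiff.1 hj).1).1.le
  rw [← prod_inter_mul_prod_sdiff s (Ioc a b), ← prod_inter_mul_prod_sdiff (Ioc a b) s,
    inter_comm s]
  refine mul_le_mul' le_rfl ?_
  calc ∏ j ∈ s \ Ioc a b, g j
      ≤ g a ^ #(s \ Ioc a b) := prod_le_pow_card _ _ _ hlow
    _ ≤ g a ^ #(Ioc a b \ s) := pow_le_pow_right' ha (card_sdiff_le_card_sdiff_iff.2 hcard)
    _ ≤ ∏ j ∈ Ioc a b \ s, g j := pow_card_le_prod _ _ _ hhigh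

end Exchange

section DisjointPrimes

variable {ι α : Type*}

lemma prime_dvd_prod_choice_iff {M : Type*} [CommMonoidWithZero M] [IsCancelMulZero M]
    [Subsingleton Mˣ] {q : ι → α → M} (hq : ∀ i a, Prime (q i a)) (hinj : Function.Injective2 q)
    {s : Finset ι} {m : ι → α} {i : ι} {a : α} :
    q i a ∣ ∏ j ∈ s, q j (m j) ↔ i ∈ s ∧ a = m i := by
  constructor
  · intro hdvd
    obtain ⟨j, hj, hij⟩ := (hq i a).exists_mem_finset_dvd hdvd
    have heq : q i a = q j (m j) :=
      associated_iff_eq.1 ((hq i a).associated_of_dvd (hq j (m j)) hij)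
    obtain ⟨rfl, ha⟩ := hinj heq
    exact ⟨hj, ha⟩
  · rintro ⟨hi, rfl⟩
    exact dvd_prod_of_mem (fun j ↦ q j (m j)) hi

lemma eq_of_prod_choice_modEq [Fintype ι] [DecidableEq α] {q : ι → α → ℕ}
    (hq : ∀ i a, (q i a).Prime) (hinj : Function.Injective2 q) {m m' : ι → α} {n : ℕ}
    (hcop : (∏ i, q i (m i)).Coprime n)
    (hlt : ∏ i with m i ≠ m' i, q i (m i) < n) (hlt' : ∏ i with m i ≠ m' i, q i (m' i) < n)
    (hcong : ∏ i, q i (m i) ≡ ∏ i, q i (m' i) [MOD n]) : m = m' := by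
  have hcommon : ∏ i with ¬m i ≠ m' i, q i (m' i) = ∏ i with ¬m i ≠ m' i, q i (m i) :=
    prod_congr rfl fun i hi ↦ by rw [not_not.1 (mem_filter.1 hi).2]
  rw [← prod_filter_mul_prod_filter_not univ (fun i ↦ m i ≠ m' i)] at hcop
  rw [← prod_filter_mul_prod_filter_not univ (fun i ↦ m i ≠ m' i),
    ← prod_filter_mul_prod_filter_not univ (fun i ↦ m i ≠ m' i) (fun i ↦ q i (m' i)),
    hcommon] at hcong
  have heq : ∏ i with m i ≠ m' i, q i (m i) = ∏ i with m i ≠ m' i, q i (m' i) :=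
    (hcong.cancel_right_of_coprime hcop.coprime_mul_left.symm).eq_of_lt_of_lt hlt hlt'
  funext i
  by_contra hi
  have hdvd : q i (m i) ∣ ∏ i with m i ≠ m' i, q i (m' i) :=
    heq ▸ dvd_prod_of_mem (fun i ↦ q i (m i)) (mem_filter.2 ⟨mem_univ i, hi⟩)
  exact hi ((prime_dvd_prod_choice_iff (fun i a ↦ (hq i a).prime) hinj).1 hdvd).2

end DisjointPrimes

section Packs

variable {γ κ : ℕ}

/-- The prime `p_{iγ + d + 1}` that the digit `d` selects from the `i`-th pack of `γ` consecutive
primes. The shift by one disappears because `Nat.nth Nat.Prime` starts at index `0`. -/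
noncomputable def packPrime (i : Fin κ) (d : Fin γ) : ℕ :=
  Nat.nth Nat.Prime (i.val * γ + d.val)

/-- The encoding `ĉ(m)` of the digit string `m`, before reduction modulo `p`. -/
noncomputable def packEncode (m : Fin κ → Fin γ) : ℕ :=
  ∏ i, packPrime i (m i)

lemma packPrime_prime (i : Fin κ) (d : Fin γ) : (packPrime i d).Prime :=
  Nat.prime_nth_prime _

lemma packPrime_injective2 : Function.Injective2 (packPrime : Fin κ → Fin γ → ℕ) := by
  intro i j d e h
  have hidx : i.val * γ + d.val = j.val * γ + e.val :=
    Nat.nth_injective Nat.infinite_setOfPred_prime h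
  have hpair : finProdFinEquiv (i, d) = finProdFinEquiv (j, e) :=
    Fin.ext (by simpa [add_comm, mul_comm] using hidx)
  exact Prod.mk.inj (finProdFinEquiv.injective hpair)

lemma monotone_nth_prime_mul_sub_one (γ : ℕ) :
    Monotone fun j ↦ Nat.nth Nat.Prime (γ * j - 1) := fun _ _ hij ↦
  Nat.nth_monotone Nat.infinite_setOfPred_prime (Nat.sub_le_sub_right (Nat.mul_le_mul_left γ hij) 1)

lemma prod_nth_prime_lt_of_two_mul_sq_lt {ι : Type*} {k : ι → ℕ} {s u : Finset ι} {n : ℕ}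
    (hsu : s ⊆ u) (hu : 2 * (∏ j ∈ u, Nat.nth Nat.Prime (k j)) ^ 2 < n) :
    ∏ j ∈ s, Nat.nth Nat.Prime (k j) < n :=
  calc ∏ j ∈ s, Nat.nth Nat.Prime (k j)
      ≤ ∏ j ∈ u, Nat.nth Nat.Prime (k j) :=
        prod_le_prod_of_subset_of_one_le' hsu fun _ _ _ ↦ (Nat.prime_nth_prime _).one_le
    _ ≤ (∏ j ∈ u, Nat.nth Nat.Prime (k j)) ^ 2 := Nat.le_self_pow two_ne_zero _
    _ < n := by omega

lemma packPrime_le_nth_prime (i : Fin κ) (d : Fin γ) :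
    packPrime i d ≤ Nat.nth Nat.Prime (γ * (i.val + 1) - 1) := by
  refine Nat.nth_monotone Nat.infinite_setOfPred_prime (Nat.le_sub_one_of_lt ?_)
  calc i.val * γ + d.val < i.val * γ + γ := Nat.add_lt_add_left d.isLt _
    _ = γ * (i.val + 1) := by ring

lemma prod_packPrime_le (m : Fin κ → Fin γ) {t : ℕ} {s : Finset (Fin κ)} (hs : #s ≤ t) :
    ∏ i ∈ s, packPrime i (m i) ≤ ∏ j ∈ Ioc (κ - t) κ, Nat.nth Nat.Prime (γ * j - 1) := by
  let e : Fin κ ↪ ℕ := Fin.valEmbedding.trans (addRightEmbedding 1)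
  have hle : ∀ j ∈ s.map e, j ≤ κ := by
    simp only [mem_map, forall_exists_index, and_imp, forall_apply_eq_imp_iff₂]
    exact fun i _ ↦ i.isLt
  have hcard : #(s.map e) ≤ #(Ioc (κ - t) κ) := by
    have hsκ : #s ≤ κ := card_finset_fin_le s
    rw [card_map, Nat.card_Ioc]
    omega
  calc ∏ i ∈ s, packPrime i (m i)
      ≤ ∏ i ∈ s, Nat.nth Nat.Prime (γ * e i - 1) :=
        prod_le_prod' fun i _ ↦ packPrime_le_nth_prime i (m i)
    _ = ∏ j ∈ s.map e, Nat.nth Nat.Prime (γ * j - 1) :=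
        (prod_map s e fun j ↦ Nat.nth Nat.Prime (γ * j - 1)).symm
    _ ≤ ∏ j ∈ Ioc (κ - t) κ, Nat.nth Nat.Prime (γ * j - 1) :=
        prod_le_prod_Ioc_of_card_le (monotone_nth_prime_mul_sub_one γ)
          (Nat.prime_nth_prime _).one_le hle hcard

lemma packEncode_coprime_of_nth_prime_lt {p : ℕ} (hp : p.Prime)
    (hlt : Nat.nth Nat.Prime (γ * κ - 1) < p) (m : Fin κ → Fin γ) :
    (packEncode m).Coprime p := by
  refine Nat.Coprime.prod_left fun i _ ↦ (Nat.coprime_primes (packPrime_prime i (m i)) hp).2 ?_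
  have hle : packPrime i (m i) ≤ Nat.nth Nat.Prime (γ * κ - 1) :=
    (packPrime_le_nth_prime i (m i)).trans (monotone_nth_prime_mul_sub_one γ i.isLt)
  exact (hle.trans_lt hlt).ne

theorem prime_packing_injective_on_ball_general {t n : ℕ} {m m' : Fin κ → Fin γ}
    (hn : (packEncode m).Coprime n)
    (hbig : ∏ j ∈ Ioc (κ - t) κ, Nat.nth Nat.Prime (γ * j - 1) < n)
    (hdist : hammingDist m m' ≤ t) (hcong : packEncode m ≡ packEncode m' [MOD n]) :
    m = m' :=
  eq_of_prod_choice_modEq packPrime_prime packPrime_injective2 hn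
    ((prod_packPrime_le m hdist).trans_lt hbig) ((prod_packPrime_le m' hdist).trans_lt hbig) hcong

end Packs

/-- Correctness of the prime-packing encoding: with `f = ∏_{j=κ−t}^{κ} p_{γj}` and a
prime `p > 2f²`, the map `ĉ(m) = ∏_{i<κ} p_{iγ + m_i + 1} mod p` is injective on
digit strings differing in at most `t` positions. -/
theorem prime_packing_injective_on_ball
    (γ κ t : ℕ) (hγ : 2 ≤ γ) (hκ : 1 ≤ κ) (ht : t ≤ κ) (p : ℕ) (hp : p.Prime)
    (hpbig : 2 * (∏ j ∈ Finset.Icc (κ - t) κ, Nat.nth Nat.Prime (γ * j - 1)) ^ 2 < p)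
    (m m' : Fin κ → Fin γ)
    (hdist : (Finset.univ.filter (fun i : Fin κ => m i ≠ m' i)).card ≤ t)
    (hcong : (∏ i : Fin κ, Nat.nth Nat.Prime (i.val * γ + (m i).val)) ≡
             (∏ i : Fin κ, Nat.nth Nat.Prime (i.val * γ + (m' i).val)) [MOD p]) :
    m = m' := by
  have hlast : Nat.nth Nat.Prime (γ * κ - 1) < p := by
    simpa using prod_nth_prime_lt_of_two_mul_sq_lt (s := {κ}) (by simp) hpbig
  exact prime_packing_injective_on_ball_general (packEncode_coprime_of_nth_prime_lt hp hlast m)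
    (prod_nth_prime_lt_of_two_mul_sq_lt Ioc_subset_Icc_self hpbig) hdist hcong
end
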